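/- Let η be a free ultrafilter on ℕ and t ∈ [0,1). Suppose there exists X ∈ η such that X+m ∉ η for every integer m ≥ 1. Then the density measure ν_{(η,t)} has the additive property. -/

import Mathlib

open Filter Topology

noncomputable section

/-- The density measure `ν_{(η,t)}(A) = η-lim_n |A ∩ [1,⌊2^t·2^n⌋]| / (2^t·2^n)`. -/
def nuDen (η : Ultrafilter ℕ) (t : ℝ) (A : Set ℕ) : ℝ :=
  limUnder (η : Filter ℕ)
    (fun n : ℕ =>
      (Nat.card (A ∩ Set.Icc 1 ⌊(2:ℝ) ^ t * 2 ^ n⌋₊ : Set ℕ) : ℝ) / ((2:ℝ) ^ t * 2 ^ n))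

/-- A set function `ν` on `𝒫(ℕ)` has the additive property if for every increasing
sequence `A₁ ⊆ A₂ ⊆ ⋯` there is `B ⊆ ℕ` with `ν(B) = lim_i ν(A_i)` and
`ν(A_i \ B) = 0` for all `i`. -/
def AddProp (ν : Set ℕ → ℝ) : Prop :=
  ∀ A : ℕ → Set ℕ, (∀ i, A i ⊆ A (i + 1)) →
    ∃ B : Set ℕ, Tendsto (fun i => ν (A i)) atTop (𝓝 (ν B)) ∧ ∀ i, ν (A i \ B) = 0

def nN (t : ℝ) (n : ℕ) : ℕ := ⌊(2:ℝ) ^ t * 2 ^ n⌋₊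

def dd (t : ℝ) (A : Set ℕ) (n : ℕ) : ℝ :=
  (Nat.card (A ∩ Set.Icc 1 (nN t n) : Set ℕ) : ℝ) / ((2:ℝ) ^ t * 2 ^ n)

lemma D_pos (t : ℝ) (n : ℕ) : 0 < (2:ℝ) ^ t * 2 ^ n := by positivity

lemma nN_mono (t : ℝ) {a b : ℕ} (h : a ≤ b) : nN t a ≤ nN t b := by
  apply Nat.floor_mono
  have : (2:ℝ) ^ a ≤ 2 ^ b := pow_le_pow_right₀ (by norm_num) h
  have h2 : 0 < (2:ℝ) ^ t := by positivity
  nlinarith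

lemma nN_le (t : ℝ) (n : ℕ) : (nN t n : ℝ) ≤ (2:ℝ) ^ t * 2 ^ n :=
  Nat.floor_le (D_pos t n).le

lemma nN_unb (t : ℝ) (x : ℕ) : ∃ m, ∀ n, m ≤ n → x ≤ nN t n := by
  have h2 : 0 < (2:ℝ) ^ t := by positivity
  obtain ⟨m, hm⟩ := pow_unbounded_of_one_lt ((x:ℝ) / (2:ℝ) ^ t) (one_lt_two : (1:ℝ) < 2)
  refine ⟨m, fun n hn => le_trans ?_ (nN_mono t hn)⟩
  apply Nat.le_floor
  rw [div_lt_iff₀ h2] at hm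
  nlinarith

lemma dd_nonneg (t : ℝ) (A : Set ℕ) (n : ℕ) : 0 ≤ dd t A n := by
  unfold dd; positivity

lemma dd_comp (t : ℝ) (A C : Set ℕ) (n k : ℕ) (hk : k ≤ n)
    (h : ∀ x, nN t (n - k) < x → x ≤ nN t n → x ∈ A → x ∈ C) :
    dd t A n ≤ dd t C n + (1/2) ^ k := by
  have hc : Nat.card (A ∩ Set.Icc 1 (nN t n) : Set ℕ)
      ≤ Nat.card (C ∩ Set.Icc 1 (nN t n) : Set ℕ) + nN t (n - k) := by
    have hsub : A ∩ Set.Icc 1 (nN t n) ⊆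
        (C ∩ Set.Icc 1 (nN t n)) ∪ Set.Icc 1 (nN t (n-k)) := by
      rintro x ⟨hxA, hx1, hx2⟩
      by_cases hx : nN t (n - k) < x
      · exact Or.inl ⟨h x hx hx2 hxA, hx1, hx2⟩
      · exact Or.inr ⟨hx1, not_lt.1 hx⟩
    have hfin : ((C ∩ Set.Icc 1 (nN t n)) ∪ Set.Icc 1 (nN t (n-k))).Finite :=
      ((Set.finite_Icc _ _).inter_of_right _).union (Set.finite_Icc _ _)
    have h1 := Set.ncard_le_ncard hsub hfin
    have h2 := Set.ncard_union_le (C ∩ Set.Icc 1 (nN t n)) (Set.Icc 1 (nN t (n-k)))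
    have h3 : (Set.Icc 1 (nN t (n-k))).ncard = nN t (n-k) := by
      rw [← Finset.coe_Icc, Set.ncard_coe_finset]; simp
    simp only [Nat.card_coe_set_eq]
    omega
  have hD := D_pos t n
  have hN := nN_le t (n - k)
  have hc' : (Nat.card (A ∩ Set.Icc 1 (nN t n) : Set ℕ) : ℝ)
      ≤ Nat.card (C ∩ Set.Icc 1 (nN t n) : Set ℕ) + nN t (n - k) := by exact_mod_cast hc
  have hp : (2:ℝ) ^ t * 2 ^ (n - k) = (1/2) ^ k * ((2:ℝ) ^ t * 2 ^ n) := by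
    obtain ⟨m, rfl⟩ := Nat.exists_eq_add_of_le hk
    rw [Nat.add_sub_cancel_left, pow_add]
    have : ((1:ℝ)/2) ^ k * 2 ^ k = 1 := by rw [← mul_pow]; norm_num
    linear_combination (-(2:ℝ)^t * 2^m) * this
  unfold dd
  rw [div_le_iff₀ hD, add_mul, div_mul_cancel₀ _ hD.ne']
  linarith

lemma dd_empty (t : ℝ) (n : ℕ) : dd t ∅ n = 0 := by simp [dd]

lemma dd_mono (t : ℝ) {A C : Set ℕ} (h : A ⊆ C) (n : ℕ) : dd t A n ≤ dd t C n := by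
  unfold dd
  have : Nat.card (A ∩ Set.Icc 1 (nN t n) : Set ℕ)
      ≤ Nat.card (C ∩ Set.Icc 1 (nN t n) : Set ℕ) := by
    simp only [Nat.card_coe_set_eq]
    exact Set.ncard_le_ncard (Set.inter_subset_inter_left _ h)
      ((Set.finite_Icc _ _).inter_of_right _)
  have := D_pos t n
  gcongr

lemma dd_le_one (t : ℝ) (A : Set ℕ) (n : ℕ) : dd t A n ≤ 1 := by
  have := dd_comp t A ∅ n 0 (Nat.zero_le _) (fun x h1 h2 => by simp at h1; omega)
  simpa [dd_empty] using this

lemma tend (η : Ultrafilter ℕ) (t : ℝ) (A : Set ℕ) :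
    Tendsto (dd t A) η (𝓝 (nuDen η t A)) := by
  have : ∃ a, Tendsto (dd t A) η (𝓝 a) := by
    obtain ⟨a, -, ha⟩ := (isCompact_Icc (a := (0:ℝ)) (b := 1)).ultrafilter_le_nhds
      (η.map (dd t A)) (by
        rw [le_principal_iff]
        exact Ultrafilter.mem_map.2 (Filter.univ_mem' (fun n => ⟨dd_nonneg t A n, dd_le_one t A n⟩)))
    exact ⟨a, ha⟩
  exact tendsto_nhds_limUnder this

/-- If some `X ∈ η` satisfies `X + m ∉ η` for every `m ≥ 1`, then the
density measure `ν_{(η,t)}` has the additive property. -/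
theorem stmt15 (η : Ultrafilter ℕ) (hη : (η : Filter ℕ) ≤ Filter.cofinite)
    (t : ℝ) (ht : t ∈ Set.Ico (0:ℝ) 1)
    (hX : ∃ X ∈ η, ∀ m : ℕ, 1 ≤ m → (fun x => x + m) '' X ∉ η) :
    AddProp (nuDen η t) := by
  classical
  obtain ⟨X, hXη, hXm⟩ := hX
  intro A hA
  have hAm : Monotone A := monotone_nat_of_le_succ hA
  have hge : ∀ k, ∀ᶠ n in (η : Filter ℕ), k ≤ n := fun k =>
    hη (by rw [← Nat.cofinite_eq_atTop.symm]; exact eventually_ge_atTop k)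
  have hgap : ∀ k, ∀ᶠ n in (η : Filter ℕ), n ∈ X ∧ k ≤ n ∧ ∀ n' ∈ X, n - k < n' → n ≤ n' := by
    intro k
    have h1 : ∀ᶠ n in (η : Filter ℕ), ∀ m ∈ Finset.Icc 1 k, n ∉ (fun x => x + m) '' X := by
      rw [Filter.eventually_all_finset]
      intro m hm
      exact Ultrafilter.compl_mem_iff_notMem.2 (hXm m (Finset.mem_Icc.1 hm).1)
    filter_upwards [h1, hge k, hXη] with n hn hkn hnX
    refine ⟨hnX, hkn, fun n' hn' hlt => ?_⟩
    by_contra hcon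
    exact hn (n - n') (Finset.mem_Icc.2 ⟨by omega, by omega⟩) ⟨n', hn', by simp; omega⟩
  set α : ℕ → ℝ := fun i => nuDen η t (A i) with hα
  have hαm : Monotone α := fun i j hij =>
    le_of_tendsto_of_tendsto' (tend η t (A i)) (tend η t (A j)) (dd_mono t (hAm hij))
  have hαb : BddAbove (Set.range α) := ⟨1, by
    rintro _ ⟨i, rfl⟩
    exact le_of_tendsto' (tend η t (A i)) (dd_le_one t (A i))⟩
  have hlim := tendsto_atTop_ciSup hαm hαb
  set L := ⨆ i, α i
  let P : ℕ → ℕ → Prop := fun n i => |dd t (A i) n - α i| < 1 / ((i:ℝ) + 1)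
  let ι : ℕ → ℕ := fun n => Nat.findGreatest (P n) n
  have hP : ∀ i, ∀ᶠ n in (η : Filter ℕ), P n i := by
    intro i
    have := (Metric.tendsto_nhds.1 (tend η t (A i))) (1 / ((i:ℝ) + 1)) (by positivity)
    simpa only [Real.dist_eq] using this
  have hι : ∀ i, ∀ᶠ n in (η : Filter ℕ), i ≤ ι n ∧ P n (ι n) := by
    intro i
    filter_upwards [hP i, hge i] with n h1 h2
    exact ⟨Nat.le_findGreatest h2 h1, Nat.findGreatest_spec h2 h1⟩
  have hιt : Tendsto ι η atTop := tendsto_atTop.2 fun i => (hι i).mono fun n h => h.1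
  let B : Set ℕ := {x | x ∈ A (ι (sInf {n | n ∈ X ∧ x ≤ nN t n}))}
  have hB : ∀ k n, n ∈ X → (∀ n' ∈ X, n - k < n' → n ≤ n') → ∀ x, nN t (n - k) < x →
      x ≤ nN t n → (x ∈ B ↔ x ∈ A (ι n)) := by
    intro k n hn hg x h1 h2
    have : sInf {n | n ∈ X ∧ x ≤ nN t n} = n := by
      apply le_antisymm
      · exact Nat.sInf_le ⟨hn, h2⟩
      · refine le_csInf (s := {n | n ∈ X ∧ x ≤ nN t n}) ⟨n, hn, h2⟩ ?_
        rintro n' ⟨hn', hx'⟩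
        apply hg n' hn'
        by_contra hcon
        have := nN_mono t (not_lt.1 hcon)
        omega
    show x ∈ A (ι (sInf {n | n ∈ X ∧ x ≤ nN t n})) ↔ _
    rw [this]
  have hhalf : ∀ ε : ℝ, 0 < ε → ∃ k : ℕ, ((1:ℝ)/2) ^ k < ε := fun ε hε =>
    exists_pow_lt_of_lt_one hε (by norm_num)
  refine ⟨B, ?_, ?_⟩
  · have h1 : Tendsto (fun n => dd t B n - dd t (A (ι n)) n) η (𝓝 0) := by
      rw [Metric.tendsto_nhds]
      intro ε hε
      obtain ⟨k, hk⟩ := hhalf ε hε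
      filter_upwards [hgap k] with n ⟨hn, hkn, hg⟩
      have a1 := dd_comp t B (A (ι n)) n k hkn (fun x u v => (hB k n hn hg x u v).1)
      have a2 := dd_comp t (A (ι n)) B n k hkn (fun x u v => (hB k n hn hg x u v).2)
      rw [Real.dist_eq, sub_zero, abs_lt]
      constructor <;> linarith
    have h2 : Tendsto (fun n => dd t (A (ι n)) n - α (ι n)) η (𝓝 0) := by
      apply squeeze_zero_norm' (a := fun n => 1 / ((ι n : ℝ) + 1))
      · filter_upwards [hι 0] with n hn
        exact hn.2.le
      · exact tendsto_one_div_add_atTop_nhds_zero_nat.comp hιt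
    have h3 : Tendsto (fun n => α (ι n)) η (𝓝 L) := hlim.comp hιt
    have h4 : Tendsto (dd t B) η (𝓝 L) := by
      have := (h1.add h2).add h3
      simpa using this
    rw [tendsto_nhds_unique (tend η t B) h4]
    exact hlim
  · intro i
    refine tendsto_nhds_unique (tend η t _) ?_
    rw [Metric.tendsto_nhds]
    intro ε hε
    obtain ⟨k, hk⟩ := hhalf ε hε
    filter_upwards [hgap k, hι i] with n ⟨hn, hkn, hg⟩ hi
    have a1 := dd_comp t (A i \ B) ∅ n k hkn (fun x u v hx =>
      hx.2 ((hB k n hn hg x u v).2 (hAm hi.1 hx.1)))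
    rw [dd_empty] at a1
    have := dd_nonneg t (A i \ B) n
    rw [Real.dist_eq, sub_zero, abs_of_nonneg this]
    linarith
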